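/- Let c_1,...,c_n be binary supermodular cost functions on [m] with c_i(∅)=0. Let τ_i be the minimax share of agent i and c* the minimum social cost over all complete allocations. Then c* ≤ ∑_{i=1}^n τ_i. -/

import Mathlib

/-- `X` is a partition of the chores `Fin m` into `n` bundles. -/
def IsPartition {n m : ℕ} (X : Fin n → Finset (Fin m)) : Prop :=
  (∀ i j : Fin n, i ≠ j → Disjoint (X i) (X j)) ∧
    Finset.univ.biUnion X = (Finset.univ : Finset (Fin m))

/-- Binary marginals for a nonnegative-integer-valued cost function. -/
def BinaryMarginals {m : ℕ} (c : Finset (Fin m) → ℕ) : Prop :=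
  ∀ (S : Finset (Fin m)) (a : Fin m), a ∉ S →
    c (insert a S) = c S ∨ c (insert a S) = c S + 1

/-- Supermodularity (increasing marginals), in addition form. -/
def Supermod {m : ℕ} (c : Finset (Fin m) → ℕ) : Prop :=
  ∀ (S T : Finset (Fin m)) (a : Fin m), S ⊆ T → a ∉ T →
    c (insert a S) + c T ≤ c (insert a T) + c S

/-- The matroid rank function `|S| - c S` attached to a cost function. -/
def rk {m : ℕ} (c : Finset (Fin m) → ℕ) (S : Finset (Fin m)) : ℤ := (S.card : ℤ) - (c S : ℤ)

lemma cost_mono {m : ℕ} {c : Finset (Fin m) → ℕ} (h : BinaryMarginals c)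
    {S T : Finset (Fin m)} (hST : S ⊆ T) : c S ≤ c T := by
  have key : ∀ D : Finset (Fin m), c S ≤ c (D ∪ S) := by
    intro D
    induction D using Finset.induction_on with
    | empty => simp
    | insert a D _ ih =>
      rw [Finset.insert_union]
      by_cases ha : a ∈ D ∪ S
      · rwa [Finset.insert_eq_of_mem ha]
      · rcases h _ _ ha with h | h <;> omega
  have := key T
  rwa [Finset.union_eq_left.2 hST] at this

lemma rk_mono {m : ℕ} {c : Finset (Fin m) → ℕ} (h : BinaryMarginals c)
    {S T : Finset (Fin m)} (hST : S ⊆ T) : rk c S ≤ rk c T := by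
  have key : ∀ D : Finset (Fin m), rk c S ≤ rk c (D ∪ S) := by
    intro D
    induction D using Finset.induction_on with
    | empty => simp
    | insert a D _ ih =>
      rw [Finset.insert_union]
      by_cases ha : a ∈ D ∪ S
      · rwa [Finset.insert_eq_of_mem ha]
      · unfold rk at *
        rw [Finset.card_insert_of_notMem ha]
        rcases h _ _ ha with h | h <;> rw [h] <;> push_cast <;> omega
  have := key T
  rwa [Finset.union_eq_left.2 hST] at this

lemma cost_super {m : ℕ} {c : Finset (Fin m) → ℕ} (h : Supermod c)
    {S T : Finset (Fin m)} : c S + c T ≤ c (S ∪ T) + c (S ∩ T) := by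
  have key : ∀ D : Finset (Fin m), Disjoint D T →
      c (D ∪ (S ∩ T)) + c T ≤ c (D ∪ T) + c (S ∩ T) := by
    intro D
    induction D using Finset.induction_on with
    | empty => simp [add_comm]
    | insert a D haD ih =>
      intro hd
      rw [Finset.disjoint_insert_left] at hd
      have h1 := ih hd.2
      have h2 := h (D ∪ (S ∩ T)) (D ∪ T) a
        (Finset.union_subset_union_right Finset.inter_subset_right)
        (by simp [haD, hd.1])
      rw [Finset.insert_union, Finset.insert_union]
      omega
  have := key (S \ T) Finset.sdiff_disjoint
  rwa [Finset.sdiff_union_inter, Finset.sdiff_union_self_eq_union] at this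

lemma rk_sub {m : ℕ} {c : Finset (Fin m) → ℕ} (h : Supermod c)
    (S T : Finset (Fin m)) : rk c (S ∪ T) + rk c (S ∩ T) ≤ rk c S + rk c T := by
  have h1 := cost_super h (S := S) (T := T)
  have h2 := Finset.card_union_add_card_inter S T
  unfold rk
  omega

/-- Defect form of the matroid union theorem, by shrinking a cover. -/
lemma shrink {n m : ℕ} (c : Fin n → Finset (Fin m) → ℕ)
    (hmarg : ∀ i, BinaryMarginals (c i)) (hsuper : ∀ i, Supermod (c i)) (k : ℤ) :
    ∀ (N : ℕ) (X : Fin n → Finset (Fin m)), ∑ i, (X i).card = N →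
      (∀ e, ∃ i, e ∈ X i) →
      (∀ T : Finset (Fin m), (T.card : ℤ) ≤ k + ∑ i, rk (c i) (X i ∩ T)) →
      ∃ A : Fin n → Finset (Fin m), IsPartition A ∧
        (m : ℤ) ≤ k + ∑ i, rk (c i) (A i) := by
  intro N
  induction N using Nat.strong_induction_on with
  | _ N ih =>
  intro X hN hcov hP
  by_cases hdis : ∀ i j : Fin n, i ≠ j → Disjoint (X i) (X j)
  · refine ⟨X, ⟨hdis, ?_⟩, ?_⟩
    · ext e; simpa using hcov e
    · simpa using hP Finset.univ
  push Not at hdis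
  obtain ⟨i, j, hij, hd⟩ := hdis
  obtain ⟨e, hei, hej⟩ := Finset.not_disjoint_iff.1 hd
  have step : ∀ i j : Fin n, i ≠ j → e ∈ X i → e ∈ X j →
      (∃ A : Fin n → Finset (Fin m), IsPartition A ∧ (m : ℤ) ≤ k + ∑ i, rk (c i) (A i)) ∨
      ∃ T : Finset (Fin m), e ∈ T ∧
        k + ∑ l, rk (c l) ((if l = i then (X l).erase e else X l) ∩ T) + 1 ≤ (T.card : ℤ) := by
    intro i j hij hei hej
    by_cases hQ : ∀ T : Finset (Fin m), (T.card : ℤ) ≤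
        k + ∑ l, rk (c l) ((if l = i then (X l).erase e else X l) ∩ T)
    · left
      refine ih (∑ l, (if l = i then (X l).erase e else X l).card) ?_ _ rfl ?_ hQ
      · rw [← hN]
        apply Finset.sum_lt_sum
        · intro l _
          split_ifs
          · exact Finset.card_le_card (Finset.erase_subset _ _)
          · exact le_rfl
        · exact ⟨i, Finset.mem_univ _, by simpa using Finset.card_erase_lt_of_mem hei⟩
      · intro f
        by_cases hf : f = e
        · exact ⟨j, by simp [hij.symm, hf, hej]⟩
        · obtain ⟨l, hl⟩ := hcov f
          refine ⟨l, ?_⟩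
          split_ifs <;> simp [hf, hl]
    · right
      push Not at hQ
      obtain ⟨T, hT⟩ := hQ
      refine ⟨T, ?_, by omega⟩
      by_contra he
      have : ∀ l, (if l = i then (X l).erase e else X l) ∩ T = X l ∩ T := by
        intro l
        split_ifs
        · ext x
          simp only [Finset.mem_inter, Finset.mem_erase]
          grind
        · rfl
      simp only [this] at hT
      have := hP T
      omega
  rcases step i j hij hei hej with h | ⟨T, heT, hT⟩
  · exact h
  rcases step j i hij.symm hej hei with h | ⟨T', heT', hT'⟩
  · exact h
  exfalso
  have hU := hP (T ∪ T')
  have hI := hP ((T ∩ T').erase e)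
  have hcard := Finset.card_union_add_card_inter T T'
  have heI : e ∈ T ∩ T' := Finset.mem_inter.2 ⟨heT, heT'⟩
  have hce := Finset.card_erase_add_one heI
  have hsum : ∑ l, rk (c l) (X l ∩ (T ∪ T')) + ∑ l, rk (c l) (X l ∩ (T ∩ T').erase e) ≤
      ∑ l, rk (c l) ((if l = i then (X l).erase e else X l) ∩ T) +
      ∑ l, rk (c l) ((if l = j then (X l).erase e else X l) ∩ T') := by
    rw [← Finset.sum_add_distrib, ← Finset.sum_add_distrib]
    apply Finset.sum_le_sum
    intro l _
    refine le_trans (add_le_add ?_ ?_) (rk_sub (hsuper l) _ _)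
    · apply rk_mono (hmarg l)
      intro x hx
      simp only [Finset.mem_inter, Finset.mem_union] at hx ⊢
      grind
    · apply rk_mono (hmarg l)
      intro x hx
      simp only [Finset.mem_inter, Finset.mem_erase] at hx ⊢
      grind
  omega

lemma share_bound {n m : ℕ} {c : Finset (Fin m) → ℕ} (hmarg : BinaryMarginals c)
    {t : ℕ} {X : Fin n → Finset (Fin m)} (hX : IsPartition X) (ht : ∀ j, c (X j) ≤ t)
    (T : Finset (Fin m)) : (T.card : ℤ) ≤ n * (rk c T + t) := by
  have h1 : T = Finset.univ.biUnion (fun j => X j ∩ T) := by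
    rw [← Finset.biUnion_inter, hX.2, Finset.univ_inter]
  have h2 : T.card = ∑ j, (X j ∩ T).card := by
    conv_lhs => rw [h1]
    apply Finset.card_biUnion
    intro i _ j _ hij
    exact (hX.1 i j hij).mono Finset.inter_subset_left Finset.inter_subset_left
  rw [h2]
  push_cast
  calc ∑ j, ((X j ∩ T).card : ℤ) ≤ ∑ _j : Fin n, (rk c T + t) := by
        apply Finset.sum_le_sum
        intro j _
        have a := rk_mono hmarg (Finset.inter_subset_right : X j ∩ T ⊆ T)
        have b := cost_mono hmarg (Finset.inter_subset_left : X j ∩ T ⊆ X j)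
        have d := ht j
        unfold rk at *
        omega
    _ = _ := by simp

/-- for binary supermodular costs, the minimum social cost `c*` is at most
the sum of the agents' minimax shares. -/
theorem min_social_cost_le_sum_minimax_shares (n m : ℕ) (hn : 1 ≤ n)
    (c : Fin n → Finset (Fin m) → ℕ)
    (hmarg : ∀ i, BinaryMarginals (c i)) (hsuper : ∀ i, Supermod (c i))
    (h0 : ∀ i, c i ∅ = 0)
    (τ : Fin n → ℕ)
    (hτ : ∀ i, IsLeast {t : ℕ | ∃ X : Fin n → Finset (Fin m), IsPartition X ∧
        IsGreatest (Set.range fun j => c i (X j)) t} (τ i))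
    (cstar : ℕ)
    (hcstar : IsLeast {s : ℕ | ∃ A : Fin n → Finset (Fin m), IsPartition A ∧
        s = ∑ i, c i (A i)} cstar) :
    cstar ≤ ∑ i, τ i := by
  have hcov : ∀ T : Finset (Fin m), (T.card : ℤ) ≤
      (∑ i, (τ i : ℤ)) + ∑ i, rk (c i) (Finset.univ ∩ T) := by
    intro T
    have hb : ∀ i, (T.card : ℤ) ≤ n * (rk (c i) T + τ i) := by
      intro i
      obtain ⟨X, hX, hg⟩ := (hτ i).1
      exact share_bound (hmarg i) hX (fun j => hg.2 ⟨j, rfl⟩) T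
    have hs := Finset.sum_le_sum (fun i (_ : i ∈ (Finset.univ : Finset (Fin n))) => hb i)
    rw [← Finset.mul_sum, Finset.sum_add_distrib] at hs
    simp only [Finset.sum_const, Finset.card_univ, Fintype.card_fin, nsmul_eq_mul] at hs
    have hn' : (0 : ℤ) < n := by exact_mod_cast hn
    have := le_of_mul_le_mul_left hs hn'
    simp only [Finset.univ_inter]
    linarith
  obtain ⟨A, hA, hm⟩ := shrink c hmarg hsuper (∑ i, (τ i : ℤ)) _ (fun _ => Finset.univ) rfl
    (fun e => ⟨⟨0, hn⟩, Finset.mem_univ e⟩) hcov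
  have hle : cstar ≤ ∑ i, c i (A i) := hcstar.2 ⟨A, hA, rfl⟩
  have hcard : ∑ i, (A i).card = m := by
    rw [← Finset.card_biUnion (fun i _ j _ hij => hA.1 i j hij), hA.2]
    simp
  have hcz : ∑ i, ((A i).card : ℤ) = m := by exact_mod_cast hcard
  simp only [rk, Finset.sum_sub_distrib] at hm
  have hlz : (cstar : ℤ) ≤ ∑ i, (c i (A i) : ℤ) := by exact_mod_cast hle
  have : (cstar : ℤ) ≤ ∑ i, (τ i : ℤ) := by linarith
  exact_mod_cast this
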